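/- Let N ≥ 2 be an integer, α ∈ ℝ, and κ a Feller Markov kernel on ℝ^N (i.e. v ↦ ∫ f dκ(v) is continuous for every bounded continuous f : ℝ^N → ℝ) with k-step kernels P_k. Let V : ℝ^N → [1,∞) be continuous with V(v) → ∞ as |v| → ∞, and suppose there are α₁ ∈ (0,1), α₂ ∈ [0,∞) with ∫ V d(κ(v)) ≤ α₁ V(v) + α₂ for every v ∈ ℝ^N (Lyapunov condition). Fix γ ∈ (√α₁, 1) and set S := {v ∈ ℝ^N : V(v) ≤ 2α₂/(γ − α₁)}. Assume further: (i) κ(v)(D_α) = 1 for every v ∈ D_α; (ii) there exists w* in the interior of S with w* ∈ D_α such that for every δ > 0 there is k̄ ∈ ℕ with P_{k̄}(w, B_δ(w*) ∩ D_α) > 0 for every w ∈ S ∩ D_α; (iii) for every k ≥ 1 there is p_k : ℝ^N × ℝ^N → ℝ, jointly continuous on (S ∩ D_α) × (S ∩ D_α), such that P_k(v,B) = ∫_B p_k(v,w) dμ_{D_α}(w) for every v ∈ S ∩ D_α and every Borel set B ⊆ S ∩ D_α. Then κ admits exactly one invariant probability measure μ with μ(D_α) = 1. -/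

import Mathlib

open MeasureTheory

/-- The `k`-step kernels of a Markov kernel `κ` (`k`-fold composition of `κ`). -/
noncomputable def iterKernel {E : Type*} [MeasurableSpace E]
    (κ : E → Measure E) : ℕ → E → Measure E
  | 0, v => Measure.dirac v
  | (k + 1), v => (iterKernel κ k v).bind κ

section Helpers

open Filter Topology
open scoped ENNReal

variable {E : Type*} [MeasurableSpace E]

lemma iterKernel_measurable {κ : E → Measure E} (hκ : Measurable κ) (k : ℕ) :
    Measurable (iterKernel κ k) := by
  induction k with
  | zero => exact Measure.measurable_dirac
  | succ k ih => exact (Measure.measurable_bind' hκ).comp ih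

lemma bind_prob {κ : E → Measure E} (hκ : Measurable κ) (hp : ∀ v, IsProbabilityMeasure (κ v))
    (μ : Measure E) : μ.bind κ Set.univ = μ Set.univ := by
  rw [Measure.bind_apply MeasurableSet.univ hκ.aemeasurable]
  simp

lemma iterKernel_prob {κ : E → Measure E} (hκ : Measurable κ)
    (hp : ∀ v, IsProbabilityMeasure (κ v)) (k : ℕ) (v : E) :
    IsProbabilityMeasure (iterKernel κ k v) := by
  induction k with
  | zero => exact Measure.dirac.isProbabilityMeasure
  | succ k ih => exact ⟨by rw [iterKernel, bind_prob hκ hp]; exact measure_univ⟩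

lemma iterKernel_add {κ : E → Measure E} (hκ : Measurable κ) (m n : ℕ) (v : E) :
    iterKernel κ (m + n) v = (iterKernel κ m v).bind (iterKernel κ n) := by
  induction n with
  | zero => exact Measure.bind_dirac.symm
  | succ n ih =>
    rw [← add_assoc, iterKernel, ih, Measure.bind_bind (iterKernel_measurable hκ n).aemeasurable
      hκ.aemeasurable]
    rfl

lemma bind_iterKernel {κ : E → Measure E} (hκ : Measurable κ) {μ : Measure E}
    (h : μ.bind κ = μ) (n : ℕ) : μ.bind (iterKernel κ n) = μ := by
  induction n with
  | zero => exact Measure.bind_dirac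
  | succ n ih =>
    have : μ.bind (iterKernel κ (n + 1)) = (μ.bind (iterKernel κ n)).bind κ := by
      rw [Measure.bind_bind (iterKernel_measurable hκ n).aemeasurable hκ.aemeasurable]
      rfl
    rw [this, ih, h]

lemma iterKernel_carrier {κ : E → Measure E} (hκ : Measurable κ)
    (hp : ∀ v, IsProbabilityMeasure (κ v)) {D : Set E} (hD : MeasurableSet D)
    (hi : ∀ v ∈ D, κ v D = 1) (k : ℕ) (v : E) (hv : v ∈ D) : iterKernel κ k v D = 1 := by
  induction k with
  | zero => simp [iterKernel, hv]
  | succ k ih =>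
    have := iterKernel_prob hκ hp k v
    rw [iterKernel, Measure.bind_apply hD hκ.aemeasurable]
    have hae : ∀ᵐ x ∂(iterKernel κ k v), x ∈ D := by
      rw [← prob_compl_eq_zero_iff hD] at ih
      exact ih
    rw [lintegral_congr_ae (g := fun _ => 1) (hae.mono fun x hx => hi x hx)]
    simp

lemma bind_mono_left {κ : E → Measure E} (hκ : Measurable κ) {μ ν : Measure E} (h : μ ≤ ν) :
    μ.bind κ ≤ ν.bind κ := by
  rw [Measure.le_iff]
  intro s hs
  rw [Measure.bind_apply hs hκ.aemeasurable, Measure.bind_apply hs hκ.aemeasurable]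
  exact lintegral_mono' h le_rfl

lemma bind_add_left {κ : E → Measure E} (hκ : Measurable κ) (μ ν : Measure E) :
    (μ + ν).bind κ = μ.bind κ + ν.bind κ := by
  ext s hs
  rw [Measure.add_apply, Measure.bind_apply hs hκ.aemeasurable,
    Measure.bind_apply hs hκ.aemeasurable, Measure.bind_apply hs hκ.aemeasurable,
    lintegral_add_measure]

lemma eq_of_le_of_mass {μ ν : Measure E} [IsFiniteMeasure ν] (h : μ ≤ ν)
    (hm : ν Set.univ ≤ μ Set.univ) : μ = ν := by
  have : IsFiniteMeasure μ := isFiniteMeasure_of_le ν h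
  have h1 := Measure.sub_add_cancel_of_le h
  have h2 : (ν - μ) Set.univ = 0 := by
    rw [Measure.sub_apply MeasurableSet.univ h]
    exact tsub_eq_zero_of_le hm
  rw [Measure.measure_univ_eq_zero] at h2
  rw [h2, zero_add] at h1
  exact h1

lemma integral_bind_bcf [TopologicalSpace E] [OpensMeasurableSpace E]
    {κ : E → Measure E} (hκ : Measurable κ)
    (hp : ∀ v, IsProbabilityMeasure (κ v)) (μ : Measure E) [IsProbabilityMeasure μ]
    (f : BoundedContinuousFunction E ℝ) :
    ∫ x, f x ∂(μ.bind κ) = ∫ v, ∫ x, f x ∂(κ v) ∂μ := by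
  let K : ProbabilityTheory.Kernel E E := ⟨κ, hκ⟩
  have hK : ProbabilityTheory.IsMarkovKernel K := ⟨hp⟩
  have : IsProbabilityMeasure (μ.bind κ) := ⟨by rw [bind_prob hκ hp]; exact measure_univ⟩
  have h := ProbabilityTheory.Kernel.integral_comp (κ := ProbabilityTheory.Kernel.const Unit μ)
    (η := K) (a := ()) (f := f) (by
      rw [ProbabilityTheory.Kernel.comp_apply, ProbabilityTheory.Kernel.const_apply]
      exact f.integrable (μ.bind κ))
  rw [ProbabilityTheory.Kernel.comp_apply, ProbabilityTheory.Kernel.const_apply] at h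
  exact h

/-- Uniqueness. -/
lemma unique_of_small {κ : E → Measure E} (hκ : Measurable κ)
    (hp : ∀ v, IsProbabilityMeasure (κ v)) {D : Set E}
    (hD : MeasurableSet D) (hmin : ∃ ν : Measure E, ν ≠ 0 ∧ ∀ π : Measure E, IsFiniteMeasure π →
      π ≠ 0 → π Dᶜ = 0 → π.bind κ = π → ∃ c : ℝ≥0∞, c ≠ 0 ∧ c • ν ≤ π)
    (μ₁ μ₂ : Measure E) [IsProbabilityMeasure μ₁] [IsProbabilityMeasure μ₂]
    (h₁ : μ₁.bind κ = μ₁) (h₂ : μ₂.bind κ = μ₂) (d₁ : μ₁ D = 1) (d₂ : μ₂ D = 1) : μ₁ = μ₂ := by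
  obtain ⟨ν, hν, hmin⟩ := hmin
  have sub_inv : ∀ m μ : Measure E, IsFiniteMeasure μ → m ≤ μ → m.bind κ = m → μ.bind κ = μ →
      (μ - m).bind κ = μ - m := by
    intro m μ hμ hle hm hi
    have : IsFiniteMeasure m := isFiniteMeasure_of_le μ hle
    have h1 := Measure.sub_add_cancel_of_le hle
    have h2 : (μ - m).bind κ + m = (μ - m) + m := by
      have h3 := bind_add_left hκ (μ - m) m
      rw [h1, hi, hm] at h3
      rw [← h3, h1]
    rw [← Measure.add_sub_cancel (μ := (μ - m).bind κ) (ν := m), h2, Measure.add_sub_cancel]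
  set m := μ₁ ⊓ μ₂ with hmdef
  have hm1 : m ≤ μ₁ := inf_le_left
  have hm2 : m ≤ μ₂ := inf_le_right
  have : IsFiniteMeasure m := isFiniteMeasure_of_le μ₁ hm1
  have hmi : m.bind κ = m := by
    apply eq_of_le_of_mass
    · exact le_inf (h₁ ▸ bind_mono_left hκ hm1) (h₂ ▸ bind_mono_left hκ hm2)
    · rw [bind_prob hκ hp]
  have hdisj : ∀ ρ : Measure E, ρ ≤ μ₁ - m → ρ ≤ μ₂ - m → ρ = 0 := by
    intro ρ r1 r2
    have a1 : ρ + m ≤ μ₁ := by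
      rw [← Measure.sub_add_cancel_of_le hm1]; exact add_le_add_left r1 m
    have a2 : ρ + m ≤ μ₂ := by
      rw [← Measure.sub_add_cancel_of_le hm2]; exact add_le_add_left r2 m
    have a3 : ρ + m ≤ m := le_inf a1 a2
    have a4 := a3 Set.univ
    rw [Measure.add_apply] at a4
    rw [← Measure.measure_univ_eq_zero]
    by_contra hne
    have := ENNReal.lt_add_right (measure_ne_top m Set.univ) hne
    rw [add_comm] at this
    exact absurd a4 (not_le.2 this)
  by_cases z1 : μ₁ - m = 0
  · have := Measure.sub_add_cancel_of_le hm1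
    rw [z1, zero_add] at this
    exact eq_of_le_of_mass (this ▸ hm2) (by simp)
  by_cases z2 : μ₂ - m = 0
  · have := Measure.sub_add_cancel_of_le hm2
    rw [z2, zero_add] at this
    exact (eq_of_le_of_mass (this ▸ hm1) (by simp)).symm
  exfalso
  have key : ∀ μ : Measure E, IsProbabilityMeasure μ → m ≤ μ → μ.bind κ = μ → μ D = 1 →
      μ - m ≠ 0 → ∃ c : ℝ≥0∞, c ≠ 0 ∧ c • ν ≤ μ - m := by
    intro μ hμ hle hi hd hz
    refine hmin _ (isFiniteMeasure_of_le μ Measure.sub_le) hz ?_ (sub_inv m μ inferInstance hle hmi hi)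
    have h0 : μ Dᶜ = 0 := (prob_compl_eq_zero_iff hD).2 hd
    exact le_antisymm (h0 ▸ (Measure.sub_le (μ := μ) (ν := m)) Dᶜ) zero_le
  obtain ⟨c1, hc1, l1⟩ := key μ₁ inferInstance hm1 h₁ d₁ z1
  obtain ⟨c2, hc2, l2⟩ := key μ₂ inferInstance hm2 h₂ d₂ z2
  have := hdisj (min c1 c2 • ν)
    (le_trans (fun s => by simp only [Measure.smul_apply, smul_eq_mul]; gcongr; exact min_le_left _ _) l1)
    (le_trans (fun s => by simp only [Measure.smul_apply, smul_eq_mul]; gcongr; exact min_le_right _ _) l2)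
  have h3 : (min c1 c2 • ν) Set.univ = 0 := by rw [this]; rfl
  rw [Measure.smul_apply, smul_eq_mul, mul_eq_zero] at h3
  rcases h3 with h3 | h3
  · rcases min_choice c1 c2 with h | h <;> rw [h] at h3 <;> contradiction
  · exact hν (Measure.measure_univ_eq_zero.1 h3)

/-- A nonzero invariant finite measure charges the level set. -/
lemma charges_level {κ : E → Measure E} (hκ : Measurable κ)
    (hp : ∀ v, IsProbabilityMeasure (κ v)) {V : E → ℝ≥0∞} (hV : Measurable V)
    (hV1 : ∀ v, V v ≠ 0) (hVt : ∀ v, V v ≠ ∞) {β : ℝ≥0∞} (hβ : β < 1) {S : Set E}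
    (hLy : ∀ v ∉ S, ∫⁻ w, V w ∂(κ v) ≤ β * V v) (π : Measure E) [IsFiniteMeasure π]
    (hi : π.bind κ = π) (hS : π S = 0) : π = 0 := by
  have hae : ∀ᵐ v ∂π, v ∉ S := measure_eq_zero_iff_ae_notMem.1 hS
  have hM : ∀ M : ℕ, ∀ᵐ v ∂π, min (β * V v) M = min (V v) M := by
    intro M
    have hle : ∀ v, min (β * V v) M ≤ min (V v) M := fun v =>
      min_le_min_right _ (mul_le_of_le_one_left zero_le hβ.le)
    have hmeas : Measurable fun v => min (β * V v) (M : ℝ≥0∞) :=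
      (hV.const_mul β).min measurable_const
    have hmeas' : Measurable fun v => min (V v) (M : ℝ≥0∞) := hV.min measurable_const
    have hfin : ∫⁻ v, min (V v) M ∂π ≠ ∞ := by
      refine ((lintegral_mono (fun v => min_le_right (V v) (M : ℝ≥0∞))).trans_lt ?_).ne
      rw [lintegral_const]
      exact ENNReal.mul_lt_top (by simp) (measure_lt_top _ _)
    have hint : ∫⁻ v, min (V v) M ∂π ≤ ∫⁻ v, min (β * V v) M ∂π := by
      conv_lhs => rw [← hi]
      rw [Measure.lintegral_bind hκ.aemeasurable hmeas'.aemeasurable]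
      refine lintegral_mono_ae (hae.mono fun v hv => le_min ?_ ?_)
      · exact (lintegral_mono (fun w => min_le_left _ _)).trans (hLy v hv)
      · refine (lintegral_mono (fun w => min_le_right _ _)).trans ?_
        simp
    have := ae_eq_of_ae_le_of_lintegral_le (ae_of_all π hle)
      ((lintegral_mono hle).trans_lt hfin.lt_top).ne hmeas'.aemeasurable hint
    exact this
  rw [← ae_eq_bot, ← Filter.eventually_false_iff_eq_bot]
  filter_upwards [ae_all_iff.2 hM] with v hv
  obtain ⟨M, hM⟩ := ENNReal.exists_nat_gt (hVt v)
  have h1 := hv M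
  rw [min_eq_left hM.le] at h1
  have h2 : β * V v < V v := by
    calc β * V v < 1 * V v := (ENNReal.mul_lt_mul_iff_left (hV1 v) (hVt v)).2 hβ
      _ = V v := one_mul _
  exact absurd (h1.symm.le.trans (min_le_left _ _)) (not_le.2 h2)

/-- Krylov-Bogoliubov. -/
lemma exists_invariant [TopologicalSpace E] [T2Space E] [HasOuterApproxClosed E] [BorelSpace E]
    {κ : E → Measure E} (hκ : Measurable κ)
    (hp : ∀ v, IsProbabilityMeasure (κ v))
    (hF : ∀ f : BoundedContinuousFunction E ℝ, Continuous fun v => ∫ w, f w ∂(κ v))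
    {V : E → ℝ≥0∞} (hV : Measurable V) (hVc : ∀ M : ℕ, IsCompact {v | V v ≤ M})
    {C : ℝ≥0∞} (hC : C ≠ ∞) (w₀ : E) (hVC : ∀ k, ∫⁻ w, V w ∂(iterKernel κ k w₀) ≤ C)
    {D : Set E} (hD : IsClosed D) (hwD : w₀ ∈ D) (hi : ∀ v ∈ D, κ v D = 1) :
    ∃ μ : Measure E, IsProbabilityMeasure μ ∧ μ.bind κ = μ ∧ μ D = 1 := by
  have hP := fun k => iterKernel_prob hκ hp k w₀
  let m : ℕ → Measure E := fun n =>
    ((n : ℝ≥0∞) + 1)⁻¹ • ∑ k ∈ Finset.range (n + 1), iterKernel κ k w₀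
  have hn0 : ∀ n : ℕ, (n : ℝ≥0∞) + 1 ≠ 0 := fun n => by simp
  have hnt : ∀ n : ℕ, (n : ℝ≥0∞) + 1 ≠ ∞ := fun n => by simp
  have hmap : ∀ n (s : Set E), m n s = ((n : ℝ≥0∞) + 1)⁻¹ *
      ∑ k ∈ Finset.range (n + 1), iterKernel κ k w₀ s := by
    intro n s
    simp [m]
  have hone : ∀ (n : ℕ) (s : Set E), (∀ k, iterKernel κ k w₀ s = 1) → m n s = 1 := by
    intro n s hs
    rw [hmap, Finset.sum_congr rfl (fun k _ => hs k)]
    simp only [Finset.sum_const, Finset.card_range, nsmul_eq_mul, mul_one, Nat.cast_add,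
      Nat.cast_one]
    exact ENNReal.inv_mul_cancel (hn0 n) (hnt n)
  have hmp : ∀ n, IsProbabilityMeasure (m n) := fun n => ⟨hone n _ fun k => measure_univ⟩
  have hmV : ∀ n, ∫⁻ w, V w ∂(m n) ≤ C := by
    intro n
    simp only [m]
    rw [lintegral_smul_measure, lintegral_finsetSum_measure, smul_eq_mul]
    calc _ ≤ ((n : ℝ≥0∞) + 1)⁻¹ * ∑ k ∈ Finset.range (n + 1), C := by
            gcongr with k hk
            exact hVC k
      _ = C := by
            simp only [Finset.sum_const, Finset.card_range, nsmul_eq_mul, Nat.cast_add,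
              Nat.cast_one]
            rw [← mul_assoc, ENNReal.inv_mul_cancel (hn0 n) (hnt n), one_mul]
  let pm : ℕ → ProbabilityMeasure E := fun n => ⟨m n, hmp n⟩
  have htight : IsTightMeasureSet {((μ : ProbabilityMeasure E) : Measure E) | μ ∈ Set.range pm} := by
    rw [isTightMeasureSet_iff_exists_isCompact_measure_compl_le]
    intro ε hε
    obtain ⟨M, hM⟩ := ENNReal.exists_nat_gt (ENNReal.div_lt_top hC hε.ne').ne
    have hM0 : (M : ℝ≥0∞) ≠ 0 := (zero_le.trans_lt hM).ne'
    refine ⟨_, hVc M, ?_⟩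
    rintro _ ⟨_, ⟨n, rfl⟩, rfl⟩
    change m n _ ≤ ε
    calc m n {v | V v ≤ M}ᶜ ≤ m n {v | (M : ℝ≥0∞) ≤ V v} :=
          measure_mono fun v hv => (not_le.1 (show ¬ V v ≤ M from hv)).le
      _ ≤ (∫⁻ w, V w ∂(m n)) / M := meas_ge_le_lintegral_div hV.aemeasurable hM0 (by simp)
      _ ≤ C / M := by gcongr; exact hmV n
      _ ≤ ε := by
          by_cases ht : ε = ∞
          · simp [ht]
          rw [ENNReal.div_lt_iff (Or.inl hε.ne') (Or.inl ht)] at hM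
          refine ENNReal.div_le_of_le_mul ?_
          rw [mul_comm]; exact hM.le
  have hcomp := isCompact_closure_of_isTightMeasureSet htight
  obtain ⟨μ, -, hμ⟩ := hcomp.ultrafilter_le_nhds' ((hyperfilter ℕ).map pm)
    (by
      rw [Ultrafilter.mem_map]
      exact Filter.univ_mem' fun n => subset_closure ⟨n, rfl⟩)
  have hlim : Tendsto pm (hyperfilter ℕ : Filter ℕ) (𝓝 μ) := hμ
  refine ⟨μ, inferInstance, ?_, ?_⟩
  · have : IsProbabilityMeasure ((μ : Measure E).bind κ) :=
      ⟨by rw [bind_prob hκ hp]; exact measure_univ⟩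
    apply ext_of_forall_integral_eq_of_IsFiniteMeasure
    intro f
    rw [integral_bind_bcf hκ hp]
    have hbd : ∀ v, ‖∫ w, f w ∂(κ v)‖ ≤ ‖f‖ := fun v => f.norm_integral_le_norm (κ v)
    let g : BoundedContinuousFunction E ℝ :=
      BoundedContinuousFunction.ofNormedAddCommGroup (fun v => ∫ w, f w ∂(κ v)) (hF f) ‖f‖ hbd
    rw [ProbabilityMeasure.tendsto_iff_forall_integral_tendsto] at hlim
    have l1 := hlim f
    have l2 := hlim g
    have hsum : ∀ (h : BoundedContinuousFunction E ℝ) n, ∫ x, h x ∂(m n) =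
        ((n : ℝ) + 1)⁻¹ * ∑ k ∈ Finset.range (n + 1), ∫ x, h x ∂(iterKernel κ k w₀) := by
      intro h n
      simp only [m]
      rw [integral_smul_measure, integral_finsetSum_measure (fun k _ => h.integrable _),
        smul_eq_mul]
      congr 1
      rw [ENNReal.toReal_inv, ENNReal.toReal_add (by simp) (by simp)]
      simp
    have hg : ∀ k, ∫ x, g x ∂(iterKernel κ k w₀) = ∫ x, f x ∂(iterKernel κ (k + 1) w₀) := by
      intro k
      rw [iterKernel, integral_bind_bcf hκ hp]
      rfl
    have hdiff : ∀ n, ‖∫ x, g x ∂(m n) - ∫ x, f x ∂(m n)‖ ≤ (2 * ‖f‖) * (1 / ((n : ℝ) + 1)) := by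
      intro n
      rw [hsum, hsum, ← mul_sub, ← Finset.sum_sub_distrib]
      simp only [hg]
      rw [Finset.sum_range_sub (fun k => ∫ x, f x ∂(iterKernel κ k w₀)), norm_mul, mul_comm,
        one_div, norm_inv]
      have e1 : ‖(n : ℝ) + 1‖ = n + 1 := by
        rw [Real.norm_eq_abs, abs_of_pos (by positivity)]
      rw [e1]
      gcongr
      calc _ ≤ _ := norm_sub_le _ _
        _ ≤ ‖f‖ + ‖f‖ := add_le_add (f.norm_integral_le_norm _) (f.norm_integral_le_norm _)
        _ = 2 * ‖f‖ := by ring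
    have l3 : Tendsto (fun n => ∫ x, g x ∂(m n) - ∫ x, f x ∂(m n))
        (hyperfilter ℕ : Filter ℕ) (𝓝 0) := by
      refine squeeze_zero_norm hdiff ?_
      have := (tendsto_one_div_add_atTop_nhds_zero_nat (𝕜 := ℝ)).const_mul (2 * ‖f‖)
      rw [mul_zero] at this
      exact this.mono_left Nat.hyperfilter_le_atTop
    have := tendsto_nhds_unique l3 (l2.sub l1)
    exact (sub_eq_zero.1 this.symm)
  · have h1 := ProbabilityMeasure.limsup_measure_closed_le_of_tendsto hlim hD
    have h2 : ∀ n, (pm n : Measure E) D = 1 := fun n =>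
      hone n D fun k => iterKernel_carrier hκ hp hD.measurableSet hi k w₀ hwD
    simp only [h2, limsup_const] at h1
    exact le_antisymm prob_le_one h1

end Helpers

open Filter Topology in
/-- Local lower bound from a jointly continuous density. -/
lemma local_minor {E : Type*} [MeasurableSpace E] [PseudoMetricSpace E] [BorelSpace E]
    [SecondCountableTopology E] {T O : Set E} (hO : MeasurableSet O) (hOT : O ⊆ T)
    (μD : Measure E) (P : E → Measure E) (hP : ∀ v, IsProbabilityMeasure (P v))
    (p : E → E → ℝ) (hc : ContinuousOn (fun q : E × E => p q.1 q.2) (T ×ˢ T))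
    (hd : ∀ v ∈ T, ∀ B : Set E, MeasurableSet B → B ⊆ T → (P v B).toReal = ∫ w in B, p v w ∂μD)
    (ws : E) (hws : ws ∈ T) (hpos : 0 < P ws O) :
    ∃ δ : ℝ, 0 < δ ∧ ∃ ν : Measure E, ν ≠ 0 ∧ ∀ v ∈ Metric.ball ws δ ∩ T, ν ≤ P v := by
  have hint : 0 < ∫ w in O, p ws w ∂μD := by
    rw [← hd ws hws O hO hOT]
    exact ENNReal.toReal_pos hpos.ne' (measure_ne_top _ _)
  have hintO : IntegrableOn (p ws) O μD := by
    by_contra h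
    rw [integral_undef h] at hint
    exact lt_irrefl _ hint
  set A := {w | w ∈ O ∧ 0 < p ws w} with hA
  have hA0 : μD A ≠ 0 := by
    intro h
    refine absurd hint (not_lt.2 (integral_nonpos_of_ae ?_))
    have h' := measure_eq_zero_iff_ae_notMem.1 h
    filter_upwards [ae_restrict_of_ae h', ae_restrict_mem hO] with w h1 h2
    by_contra h3
    exact h1 ⟨h2, not_le.1 h3⟩
  obtain ⟨z, ⟨hzO, hz⟩, hzA⟩ := exists_mem_forall_mem_nhdsWithin_pos_measure hA0
  set a := p ws z with ha
  have hcz := hc (ws, z) ⟨hws, hOT hzO⟩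
  have hev : ∀ᶠ q in 𝓝[T ×ˢ T] (ws, z), p q.1 q.2 ∈ Set.Ioo (a / 2) (2 * a) :=
    hcz.eventually (Ioo_mem_nhds (by change a / 2 < a; linarith) (by change a < 2 * a; linarith))
  obtain ⟨δ, hδ, hsub⟩ := Metric.mem_nhdsWithin_iff.1 hev
  set W := Metric.ball z δ ∩ O with hW
  have hWm : MeasurableSet W := Metric.isOpen_ball.measurableSet.inter hO
  have hb : ∀ v ∈ Metric.ball ws δ ∩ T, ∀ w ∈ W, p v w ∈ Set.Ioo (a / 2) (2 * a) := by
    intro v hv w hw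
    have : (v, w) ∈ Metric.ball (ws, z) δ ∩ T ×ˢ T := by
      refine ⟨?_, hv.2, hOT hw.2⟩
      rw [← ball_prod_same]
      exact ⟨hv.1, hw.1⟩
    exact hsub this
  have hWpos : 0 < μD W := by
    refine hzA W ?_
    refine mem_nhdsWithin.2 ⟨Metric.ball z δ, Metric.isOpen_ball, Metric.mem_ball_self hδ, ?_⟩
    rintro x ⟨h1, h2⟩
    exact ⟨h1, h2.1⟩
  have hWfin : μD W ≠ ⊤ := by
    have h1 : IntegrableOn (fun _ => a / 2) W μD := by
      refine Integrable.mono' (hintO.mono_set Set.inter_subset_right)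
        aestronglyMeasurable_const ?_
      filter_upwards [ae_restrict_mem hWm] with w hw
      have := (hb ws ⟨Metric.mem_ball_self hδ, hws⟩ w hw).1
      rw [Real.norm_eq_abs, abs_of_pos (by linarith)]
      exact this.le
    rw [integrableOn_const_iff] at h1
    rcases h1 with h1 | h1
    · exact absurd h1 (by rw [enorm_eq_zero]; intro h2; linarith)
    · exact h1.ne
  refine ⟨δ, hδ, ENNReal.ofReal (a / 2) • μD.restrict W, ?_, ?_⟩
  · intro h
    have h1 : (ENNReal.ofReal (a / 2) • μD.restrict W) Set.univ = 0 := by rw [h]; rfl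
    rw [Measure.smul_apply, Measure.restrict_apply_univ, smul_eq_mul, mul_eq_zero] at h1
    rcases h1 with h1 | h1
    · rw [ENNReal.ofReal_eq_zero] at h1; linarith
    · exact hWpos.ne' h1
  · intro v hv
    rw [Measure.le_iff]
    intro B hB
    have hBW : MeasurableSet (B ∩ W) := hB.inter hWm
    have hBT : B ∩ W ⊆ T := fun x hx => hOT hx.2.2
    have hBfin : μD (B ∩ W) ≠ ⊤ :=
      ((measure_mono Set.inter_subset_right).trans_lt hWfin.lt_top).ne
    refine le_trans ?_ (measure_mono (Set.inter_subset_left (s := B) (t := W)))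
    rw [Measure.smul_apply, smul_eq_mul, Measure.restrict_apply hB,
      ← ENNReal.ofReal_toReal (measure_ne_top (P v) (B ∩ W)), hd v hv.2 _ hBW hBT]
    have hcv : ContinuousOn (p v) T := by
      refine hc.comp (f := fun w => (v, w)) (by fun_prop) ?_
      intro w hw
      exact ⟨hv.2, hw⟩
    have hiv : IntegrableOn (p v) (B ∩ W) μD := by
      refine IntegrableOn.of_bound hBfin.lt_top
        ((hcv.mono hBT).aestronglyMeasurable hBW) (2 * a) ?_
      filter_upwards [ae_restrict_mem hBW] with w hw
      have := hb v hv w hw.2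
      rw [Real.norm_eq_abs, abs_of_pos (by linarith [this.1])]
      exact this.2.le
    have hmono : ∫ w in B ∩ W, a / 2 ∂μD ≤ ∫ w in B ∩ W, p v w ∂μD := by
      refine setIntegral_mono_on (integrableOn_const hBfin) hiv hBW ?_
      intro w hw
      exact (hb v hv w hw.2).1.le
    rw [setIntegral_const, smul_eq_mul, mul_comm] at hmono
    refine le_trans ?_ (ENNReal.ofReal_le_ofReal hmono)
    rw [ENNReal.ofReal_mul (by linarith), measureReal_def, ENNReal.ofReal_toReal hBfin]

/-- Ergodicity framework for the fully discrete scheme (Theorem 5.1): a Feller Markov kernel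
on `ℝ^N` satisfying the Lyapunov condition and the mass-preserving minorization condition
restricted to the hyperplane `D_α` admits exactly one invariant probability measure carried
by `D_α`. -/
theorem stmt9 (N : ℕ) (hN : 2 ≤ N) (α : ℝ)
    (κ : EuclideanSpace ℝ (Fin N) → Measure (EuclideanSpace ℝ (Fin N)))
    (hκ_meas : Measurable κ) (hκ_prob : ∀ v, IsProbabilityMeasure (κ v))
    -- Feller property
    (hFeller : ∀ f : BoundedContinuousFunction (EuclideanSpace ℝ (Fin N)) ℝ,
      Continuous fun v => ∫ w, f w ∂(κ v))
    -- Lyapunov condition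
    (V : EuclideanSpace ℝ (Fin N) → ℝ) (hV_cont : Continuous V) (hV_one : ∀ v, 1 ≤ V v)
    (hV_inf : Filter.Tendsto V (Bornology.cobounded (EuclideanSpace ℝ (Fin N))) Filter.atTop)
    (α₁ α₂ : ℝ) (hα₁ : α₁ ∈ Set.Ioo (0 : ℝ) 1) (hα₂ : 0 ≤ α₂)
    (hLyap : ∀ v, ∫⁻ w, ENNReal.ofReal (V w) ∂(κ v) ≤ ENNReal.ofReal (α₁ * V v + α₂))
    (γ : ℝ) (hγ : γ ∈ Set.Ioo (Real.sqrt α₁) 1)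
    (S : Set (EuclideanSpace ℝ (Fin N)))
    (hS : S = {v : EuclideanSpace ℝ (Fin N) | V v ≤ 2 * α₂ / (γ - α₁)})
    (Dα : Set (EuclideanSpace ℝ (Fin N)))
    (hDα : Dα = {u : EuclideanSpace ℝ (Fin N) |
      (1 / Real.pi) * ((1 / (N : ℝ)) * ∑ i, u i * Real.sqrt (1 / Real.pi)) = α})
    (μD : Measure (EuclideanSpace ℝ (Fin N)))
    (hμD : μD = (MeasureTheory.Measure.hausdorffMeasure ((N : ℝ) - 1)).restrict Dα)
    -- (i) mass conservation
    (h_i : ∀ v ∈ Dα, κ v Dα = 1)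
    -- (ii) accessibility of a point `w* ∈ Int(S) ∩ D_α`
    (wstar : EuclideanSpace ℝ (Fin N)) (hw_int : wstar ∈ interior S) (hw_D : wstar ∈ Dα)
    (h_ii : ∀ δ : ℝ, 0 < δ → ∃ kbar : ℕ,
      ∀ w ∈ S ∩ Dα, 0 < iterKernel κ kbar w (Metric.ball wstar δ ∩ Dα))
    -- (iii) jointly continuous densities w.r.t. the Hausdorff measure on `D_α`
    (h_iii : ∀ k : ℕ, 1 ≤ k → ∃ p : EuclideanSpace ℝ (Fin N) → EuclideanSpace ℝ (Fin N) → ℝ,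
      ContinuousOn (fun q : EuclideanSpace ℝ (Fin N) × EuclideanSpace ℝ (Fin N) => p q.1 q.2)
        ((S ∩ Dα) ×ˢ (S ∩ Dα)) ∧
      ∀ v ∈ S ∩ Dα, ∀ B : Set (EuclideanSpace ℝ (Fin N)), MeasurableSet B → B ⊆ S ∩ Dα →
        (iterKernel κ k v B).toReal = ∫ w in B, p v w ∂μD) :
    ∃! μ : Measure (EuclideanSpace ℝ (Fin N)),
      IsProbabilityMeasure μ ∧ μ.bind κ = μ ∧ μ Dα = 1 := by

  have hDc : IsClosed Dα := by
    rw [hDα]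
    exact isClosed_eq (by fun_prop) continuous_const
  have hDm := hDc.measurableSet
  have hSc : IsClosed S := by
    rw [hS]
    exact isClosed_le hV_cont continuous_const
  have hSm := hSc.measurableSet
  have hγα : α₁ < γ := by
    have h1 : α₁ ≤ Real.sqrt α₁ := by
      have h2 := Real.sq_sqrt hα₁.1.le
      have h3 : Real.sqrt α₁ ≤ 1 := by
        rw [Real.sqrt_le_left (by norm_num)]; linarith [hα₁.2]
      nlinarith [Real.sqrt_nonneg α₁]
    exact lt_of_le_of_lt h1 hγ.1
  have hVpos : ∀ v, 0 < V v := fun v => lt_of_lt_of_le one_pos (hV_one v)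
  have hVm : Measurable fun v => ENNReal.ofReal (V v) := hV_cont.measurable.ennreal_ofReal
  -- existence
  have hex : ∃ μ : Measure (EuclideanSpace ℝ (Fin N)),
      IsProbabilityMeasure μ ∧ μ.bind κ = μ ∧ μ Dα = 1 := by
    have h1α : 0 < 1 - α₁ := by linarith [hα₁.2]
    set C := V wstar + α₂ / (1 - α₁) with hC
    have hCs : α₁ * C + α₂ ≤ C := by
      have h1 : (1 - α₁) * (α₂ / (1 - α₁)) = α₂ := by field_simp
      have h2 := hVpos wstar
      have h3 : 0 ≤ (1 - α₁) * V wstar := by positivity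
      rw [hC]; nlinarith
    have hC0 : 0 ≤ C := by
      have h2 := hVpos wstar
      positivity
    refine exists_invariant hκ_meas hκ_prob hFeller hVm ?_
      (C := ENNReal.ofReal C) ENNReal.ofReal_ne_top wstar ?_ hDc hw_D h_i
    · intro M
      have hcl : IsClosed {v | ENNReal.ofReal (V v) ≤ (M : ENNReal)} :=
        isClosed_le (ENNReal.continuous_ofReal.comp hV_cont) continuous_const
      refine Metric.isCompact_of_isClosed_isBounded hcl ?_
      rw [← Bornology.isCobounded_compl_iff]
      have := hV_inf.eventually (Filter.eventually_gt_atTop (M : ℝ))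
      rw [Filter.Eventually, ← Bornology.isCobounded_def] at this
      refine this.superset ?_
      intro v hv h
      have hv' : (M : ℝ) < V v := hv
      have h' : ENNReal.ofReal (V v) ≤ (M : ENNReal) := h
      rw [← ENNReal.ofReal_natCast, ENNReal.ofReal_le_ofReal_iff (by positivity)] at h'
      linarith
    · intro k
      induction k with
      | zero =>
        rw [iterKernel, lintegral_dirac' _ hVm]
        apply ENNReal.ofReal_le_ofReal
        have : 0 ≤ α₂ / (1 - α₁) := by positivity
        linarith
      | succ k ih =>
        have := iterKernel_prob hκ_meas hκ_prob k wstar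
        rw [iterKernel, Measure.lintegral_bind hκ_meas.aemeasurable hVm.aemeasurable]
        calc _ ≤ ∫⁻ v, ENNReal.ofReal (α₁ * V v + α₂) ∂(iterKernel κ k wstar) :=
              lintegral_mono hLyap
          _ = ∫⁻ v, (ENNReal.ofReal α₁ * ENNReal.ofReal (V v) + ENNReal.ofReal α₂)
                ∂(iterKernel κ k wstar) := by
              refine lintegral_congr fun v => ?_
              rw [ENNReal.ofReal_add (mul_nonneg hα₁.1.le (hVpos v).le) hα₂,
                ENNReal.ofReal_mul hα₁.1.le]
          _ = ENNReal.ofReal α₁ * ∫⁻ v, ENNReal.ofReal (V v) ∂(iterKernel κ k wstar)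
                + ENNReal.ofReal α₂ := by
              rw [lintegral_add_right _ measurable_const, lintegral_const_mul _ hVm]
              simp
          _ ≤ ENNReal.ofReal α₁ * ENNReal.ofReal C + ENNReal.ofReal α₂ := by gcongr
          _ = ENNReal.ofReal (α₁ * C + α₂) := by
              rw [ENNReal.ofReal_add (mul_nonneg hα₁.1.le hC0) hα₂, ENNReal.ofReal_mul hα₁.1.le]
          _ ≤ ENNReal.ofReal C := ENNReal.ofReal_le_ofReal hCs
  -- minorization
  have hwS : wstar ∈ S ∩ Dα := ⟨interior_subset hw_int, hw_D⟩
  obtain ⟨r, hr, hrS⟩ := Metric.isOpen_iff.1 isOpen_interior wstar hw_int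
  have hrS : Metric.ball wstar r ⊆ S := hrS.trans interior_subset
  -- a second point of `S ∩ Dα`
  obtain ⟨y, hy, hyne⟩ : ∃ y ∈ S ∩ Dα, y ≠ wstar := by
    let i : Fin N := ⟨0, by omega⟩
    let j : Fin N := ⟨1, by omega⟩
    have hij : i ≠ j := by simp [i, j]
    let d : EuclideanSpace ℝ (Fin N) := EuclideanSpace.single i 1 - EuclideanSpace.single j 1
    have hdsum : ∑ k, d k = 0 := by
      simp [d, Finset.sum_sub_distrib]
    have hd0 : d ≠ 0 := by
      intro h
      have : d i = 0 := by rw [h]; rfl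
      simp [d, hij] at this
    have hdn : 0 < ‖d‖ := norm_pos_iff.2 hd0
    refine ⟨wstar + (r / (2 * ‖d‖)) • d, ⟨hrS ?_, ?_⟩, ?_⟩
    · rw [Metric.mem_ball, dist_eq_norm, add_sub_cancel_left, norm_smul, Real.norm_eq_abs,
        abs_of_pos (by positivity)]
      have : r / (2 * ‖d‖) * ‖d‖ = r / 2 := by field_simp
      rw [this]; linarith
    · rw [hDα] at hw_D ⊢
      rw [Set.mem_ofPred_eq] at hw_D ⊢
      rw [← hw_D]
      congr 2
      rw [← Finset.sum_mul, ← Finset.sum_mul]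
      congr 1
      simp only [PiLp.add_apply, PiLp.smul_apply, smul_eq_mul]
      rw [Finset.sum_add_distrib, ← Finset.mul_sum, hdsum, mul_zero, add_zero]
    · intro h
      rw [add_eq_left, smul_eq_zero] at h
      rcases h with h | h
      · have : 0 < r / (2 * ‖d‖) := by positivity
        linarith
      · exact hd0 h
  set δ₀ := min r (dist y wstar) with hδ₀
  have hδ₀pos : 0 < δ₀ := lt_min hr (dist_pos.2 hyne)
  obtain ⟨k₀, hk₀⟩ := h_ii δ₀ hδ₀pos
  have hk₀1 : 1 ≤ k₀ := by
    rcases Nat.eq_zero_or_pos k₀ with h | h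
    · exfalso
      have h1 := hk₀ y hy
      rw [h, iterKernel, Measure.dirac_apply' _ (Metric.isOpen_ball.measurableSet.inter hDm)] at h1
      have h2 : y ∉ Metric.ball wstar δ₀ ∩ Dα := by
        rintro ⟨h3, -⟩
        exact absurd (Metric.mem_ball.1 h3) (not_lt.2 (min_le_right _ _))
      simp [h2] at h1
    · exact h
  obtain ⟨p, hpc, hpd⟩ := h_iii k₀ hk₀1
  obtain ⟨δ, hδ, ν, hν, hνle⟩ := local_minor (T := S ∩ Dα) (O := Metric.ball wstar δ₀ ∩ Dα)
    (Metric.isOpen_ball.measurableSet.inter hDm)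
    (fun x hx => ⟨hrS (Metric.ball_subset_ball (min_le_left _ _) hx.1), hx.2⟩) μD
    (iterKernel κ k₀) (iterKernel_prob hκ_meas hκ_prob k₀) p hpc hpd wstar hwS (hk₀ wstar hwS)
  obtain ⟨k₁, hk₁⟩ := h_ii (min δ r) (lt_min hδ hr)
  set Bs := Metric.ball wstar (min δ r) ∩ Dα with hBs
  have hBsm : MeasurableSet Bs := Metric.isOpen_ball.measurableSet.inter hDm
  have hBsν : ∀ v ∈ Bs, ν ≤ iterKernel κ k₀ v := fun v hv =>
    hνle v ⟨Metric.ball_subset_ball (min_le_left _ _) hv.1,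
      hrS (Metric.ball_subset_ball (min_le_right _ _) hv.1), hv.2⟩
  have hmin : ∃ ν : Measure (EuclideanSpace ℝ (Fin N)), ν ≠ 0 ∧
      ∀ π : Measure (EuclideanSpace ℝ (Fin N)), IsFiniteMeasure π →
      π ≠ 0 → π Dαᶜ = 0 → π.bind κ = π → ∃ c : ENNReal, c ≠ 0 ∧ c • ν ≤ π := by
    refine ⟨ν, hν, ?_⟩
    intro π hπ hπ0 hπD hπi
    have hπS : π S ≠ 0 := by
      intro h
      apply hπ0
      refine charges_level hκ_meas hκ_prob hVm (β := ENNReal.ofReal ((γ + α₁) / 2)) (S := S)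
        (fun v => by simpa using hVpos v) (fun v => ENNReal.ofReal_ne_top) ?_ ?_ π hπi h
      · rw [ENNReal.ofReal_lt_one]; linarith [hα₁.2, hγ.2]
      · intro v hv
        refine (hLyap v).trans ?_
        rw [← ENNReal.ofReal_mul (by linarith [hα₁.1])]
        apply ENNReal.ofReal_le_ofReal
        rw [hS, Set.mem_ofPred_eq, not_le, div_lt_iff₀ (by linarith)] at hv
        nlinarith
    have hπSD : π (S ∩ Dα) ≠ 0 := by
      rwa [measure_inter_conull hπD]
    have hmk : Measurable fun w => iterKernel κ k₁ w Bs :=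
      (Measure.measurable_coe hBsm).comp (iterKernel_measurable hκ_meas k₁)
    refine ⟨∫⁻ w in S ∩ Dα, iterKernel κ k₁ w Bs ∂π, ?_, ?_⟩
    · intro h
      rw [lintegral_eq_zero_iff hmk] at h
      have h2 : ∀ᵐ w ∂(π.restrict (S ∩ Dα)), False := by
        filter_upwards [h, ae_restrict_mem (hSm.inter hDm)] with w h3 h4
        exact (hk₁ w h4).ne' h3
      rw [Filter.eventually_false_iff_eq_bot, ae_eq_bot, Measure.restrict_eq_zero] at h2
      exact hπSD h2
    · have hP := bind_iterKernel hκ_meas hπi (k₁ + k₀)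
      rw [Measure.le_iff]
      intro s hs
      conv_rhs => rw [← hP]
      rw [Measure.bind_apply hs (iterKernel_measurable hκ_meas _).aemeasurable,
        Measure.smul_apply, smul_eq_mul, ← lintegral_mul_const _ hmk]
      refine le_trans (lintegral_mono fun w => ?_) (setLIntegral_le_lintegral (S ∩ Dα) _)
      rw [iterKernel_add hκ_meas, Measure.bind_apply hs
        (iterKernel_measurable hκ_meas _).aemeasurable]
      refine le_trans ?_ (setLIntegral_le_lintegral Bs _)
      rw [mul_comm, ← setLIntegral_const]
      exact setLIntegral_mono' hBsm fun v hv => hBsν v hv s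
  obtain ⟨μ, hμ, hμi, hμD1⟩ := hex
  refine ⟨μ, ⟨hμ, hμi, hμD1⟩, ?_⟩
  rintro μ' ⟨hμ', hμi', hμD'⟩
  exact unique_of_small hκ_meas hκ_prob hDm hmin μ' μ hμi' hμi hμD' hμD1
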